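/- Small rescalings of superposed configurations are configurations: let a : Fin l → ℝ^m be injective and let b i : Fin (k i) → ℝ^m be injective for each i : Fin l. Then there exists ε > 0 such that for every t : Fin l → ℝ with 0 < t i < ε for all i, the tuple (Σ i, Fin (k i)) → ℝ^m given by ⟨i, j⟩ ↦ a i + t i • b i j is injective. -/

import Mathlib

/-!
Two points of a superposition with the same index `i` differ because `b i` is injective and scaling
by `t i ≠ 0` preserves this. Two points with different indices lie in balls of radius `δ / 2` around
distinct centres `a i`, and these balls are disjoint when the centres are at distance at least `δ`;
scaling by less than `ε` puts the clusters in such balls as soon as they are uniformly bounded.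
-/

open Filter Function Topology

/-- The superposition `γ(a; b)`, which places a copy of the configuration `b i` at each point `a i`.
Its points are indexed by pairs `⟨i, j⟩`, so no order on them is chosen. -/
def superComp {ι E : Type*} {κ : ι → Type*} [Add E] (a : ι → E) (b : ∀ i, κ i → E) :
    (Σ i, κ i) → E :=
  fun s => a s.1 + b s.1 s.2

theorem exists_pos_pairwise_le_dist_of_injective {ι X : Type*} [Finite ι] [MetricSpace X]
    {a : ι → X} (ha : Injective a) : ∃ δ > 0, Pairwise fun i i' => δ ≤ dist (a i) (a i') := by
  have hsep : ∀ᶠ δ in 𝓝[>] (0 : ℝ), Pairwise fun i i' => δ ≤ dist (a i) (a i') := by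
    simp only [Pairwise, eventually_all]
    intro i i' hne
    exact nhdsWithin_le_nhds (eventually_le_nhds (dist_pos.2 (ha.ne hne)))
  exact (eventually_mem_nhdsWithin.and hsep).exists

section

variable {ι E : Type*} {κ : ι → Type*} [SeminormedAddCommGroup E] {a : ι → E} {b : ∀ i, κ i → E}
  {δ : ℝ}

theorem superComp_injective_of_norm_lt_half (ha : Pairwise fun i i' => δ ≤ dist (a i) (a i'))
    (hb : ∀ i, Injective (b i)) (hlt : ∀ i j, ‖b i j‖ < δ / 2) :
    Injective (superComp a b) := by
  rintro ⟨i, j⟩ ⟨i', j'⟩ (h : a i + b i j = a i' + b i' j')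
  obtain rfl | hne := eq_or_ne i i'
  · rw [hb i (add_left_cancel h)]
  · have hdist : dist (a i) (a i') < δ :=
      calc
        dist (a i) (a i') ≤ dist (a i) (a i + b i j) + dist (a i + b i j) (a i') :=
          dist_triangle _ _ _
        _ = ‖b i j‖ + ‖b i' j'‖ := by rw [dist_self_add_right, h, dist_self_add_left]
        _ < δ / 2 + δ / 2 := add_lt_add (hlt i j) (hlt i' j')
        _ = δ := add_halves δ
    exact absurd (ha hne) hdist.not_ge

theorem superComp_smul_injective_general {𝕜 : Type*} [NormedDivisionRing 𝕜] [Module 𝕜 E]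
    [IsBoundedSMul 𝕜 E] (hδ : 0 < δ) (ha : Pairwise fun i i' => δ ≤ dist (a i) (a i'))
    (hb : ∀ i, Injective (b i)) (hbdd : Bornology.IsBounded (⋃ i, Set.range (b i))) :
    ∃ ε > (0 : ℝ), ∀ t : ι → 𝕜, (∀ i, t i ≠ 0 ∧ ‖t i‖ < ε) →
      Injective (superComp a fun i => t i • b i) := by
  obtain ⟨R, hR, hbR⟩ := hbdd.exists_pos_norm_le
  refine ⟨δ / 2 / R, by positivity, fun t ht => superComp_injective_of_norm_lt_half ha
    (fun i => (MulAction.injective₀ (ht i).1).comp (hb i)) fun i j => ?_⟩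
  calc
    ‖t i • b i j‖ ≤ ‖t i‖ * ‖b i j‖ := norm_smul_le _ _
    _ ≤ ‖t i‖ * R := by
      gcongr
      exact hbR _ (Set.mem_iUnion_of_mem i (Set.mem_range_self j))
    _ < δ / 2 := (lt_div_iff₀ hR).1 (ht i).2

end

/-- Small rescalings of superposed configurations are configurations: if `a`
and all the `b i` are injective, then there is an `ε > 0` such that for all
scaling factors `0 < t i < ε` the tuple `⟨i, j⟩ ↦ a i + t i • b i j` is
injective. -/
theorem superComp_smul_injective (m l : ℕ) (k : Fin l → ℕ)
    (a : Fin l → EuclideanSpace ℝ (Fin m)) (ha : Function.Injective a)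
    (b : ∀ i : Fin l, Fin (k i) → EuclideanSpace ℝ (Fin m))
    (hb : ∀ i : Fin l, Function.Injective (b i)) :
    ∃ ε > (0 : ℝ), ∀ t : Fin l → ℝ, (∀ i, 0 < t i ∧ t i < ε) →
      Function.Injective
        (fun s : Σ i : Fin l, Fin (k i) => a s.1 + t s.1 • b s.1 s.2) := by
  obtain ⟨δ, hδ, hsep⟩ := exists_pos_pairwise_le_dist_of_injective ha
  obtain ⟨ε, hε, hinj⟩ := superComp_smul_injective_general (𝕜 := ℝ) hδ hsep hb
    (Set.finite_iUnion fun i => Set.finite_range (b i)).isBounded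
  exact ⟨ε, hε, fun t ht => hinj t fun i =>
    ⟨(ht i).1.ne', (Real.norm_of_nonneg (ht i).1.le).trans_lt (ht i).2⟩⟩
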